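/- Let C be a Z₂Z₄[ξ]-skew cyclic code, identified with a left R₄[x,θ₄]-submodule of R_θ, and let Ψ : C → R₄[x,θ₄]/⟨x^s−1⟩ be the projection onto the second coordinate. If Ψ(C) = ⟨2q(x)⟩ with the mod-2 reduction of q(x) a right divisor of x^s−1 in R₂[x,θ₂], then C = ⟨(f(x),0), (l₁(x), 2q(x))⟩, where f(x) is a right divisor of x^r−1 in R₂[x,θ₂] and l₁(x) ∈ R₂[x,θ₂] satisfies f(x) |_r h_q(x)l₁(x) (mod 2), where x^s−1 = h_q(x)q(x) (mod 2). -/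

import Mathlib

set_option synthInstance.maxHeartbeats 1000000
set_option maxHeartbeats 2000000

noncomputable section
open Polynomial

abbrev Z4 : Type := ZMod 4
abbrev Z2 : Type := ZMod 2

/-- The mod 2 reduction map `Z₄ → Z₂`. -/
def bar : Z4 →+* Z2 := ZMod.castHom (m := 2) (by norm_num) Z2

/-- The ring `R₄ = Z₄[x]/⟨h⟩` (for `h` basic primitive, the Galois ring `GR(4,m)`). -/
abbrev R4 (h : Z4[X]) : Type := Z4[X] ⧸ Ideal.span {h}

/-- The ring `R₂ = Z₂[x]/⟨h̄⟩` (for `h` basic primitive, the field `F_{2^m}`). -/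
abbrev R2 (h : Z4[X]) : Type := Z2[X] ⧸ Ideal.span {h.map bar}

/-- `ξ`, the class of `x` in `R₄`. -/
def xi (h : Z4[X]) : R4 h := Ideal.Quotient.mk _ X

/-- `ξ̄`, the class of `x` in `R₂`. -/
def xibar (h : Z4[X]) : R2 h := Ideal.Quotient.mk _ X

/-- The coefficientwise mod 2 reduction `R₄ → R₂`. -/
def barR (h : Z4[X]) : R4 h →+* R2 h :=
  Ideal.quotientMap (Ideal.span {h.map bar}) (Polynomial.mapRingHom bar)
    (by
      rw [Ideal.span_le]
      intro p hp
      simp only [Set.mem_singleton_iff] at hp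
      subst hp
      exact Ideal.mem_comap.mpr (Ideal.subset_span (by simp)))

/-- The canonical representative (of degree `< deg h`) of an element of `R₄`. -/
def rep4 (h : Z4[X]) (α : R4 h) : Z4[X] := Quotient.out α %ₘ h

/-- The canonical representative (of degree `< deg h̄`) of an element of `R₂`. -/
def rep2 (h : Z4[X]) (α : R2 h) : Z2[X] := Quotient.out α %ₘ (h.map bar)

/-- The Frobenius map `θ₄ : ∑ vᵢ ξ^i ↦ ∑ vᵢ ξ^{2i}` of `R₄`, as a bare function:
substitute `ξ²` in the canonical representative. -/
def thetaFun4 (h : Z4[X]) (α : R4 h) : R4 h := Polynomial.aeval (xi h ^ 2) (rep4 h α)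

/-- The Frobenius map `θ₂ : ∑ vᵢ ξ̄^i ↦ ∑ vᵢ ξ̄^{2i}` of `R₂`, as a bare function. -/
def thetaFun2 (h : Z4[X]) (α : R2 h) : R2 h := Polynomial.aeval (xibar h ^ 2) (rep2 h α)

/-- A lift `ι : R₂ → R₄` with `ι` mod 2 the identity: lift the coefficients of the
canonical representative from `{0,1}`. -/
def iota (h : Z4[X]) (α : R2 h) : R4 h :=
  Ideal.Quotient.mk _ ((rep2 h α).sum fun i a => C ((a.val : Z4)) * X ^ i)

/-- `h` is a monic basic primitive polynomial of degree `m`:  `h` is monic, its mod 2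
reduction `h̄` is irreducible over `Z₂`, and the root `ξ̄` of `h̄` is a primitive
element, i.e. has multiplicative order `2^m - 1`. -/
def BasicPrimitive (h : Z4[X]) (m : ℕ) : Prop :=
  h.Monic ∧ h.natDegree = m ∧ Irreducible (h.map bar) ∧ orderOf (xibar h) = 2 ^ m - 1

/-- The scalar multiplication `γ * (α,β) = (γ̄α, γβ)` making `R₂^r × R₄^s` (or any
mixed-alphabet tuple space) an `R₄`-module. -/
def smulStar (h : Z4[X]) {α β : Type*} (γ : R4 h) (v : (α → R2 h) × (β → R4 h)) :
    (α → R2 h) × (β → R4 h) :=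
  (fun i => barR h γ * v.1 i, fun j => γ * v.2 j)

/-! ### Skew polynomial rings -/

/-- The additive endomorphism `p(x) ↦ pᶿ(x)·x` of `A[x]` (the twisted shift). -/
def Tmap {A : Type*} [CommRing A] (θ : A →+* A) : AddMonoid.End (Polynomial A) :=
  (AddMonoidHom.mulRight (X : Polynomial A)).comp (Polynomial.mapRingHom θ).toAddMonoidHom

/-- Left multiplication by the constant `a`, as an additive endomorphism of `A[x]`. -/
def Lmap {A : Type*} [CommRing A] (a : A) : AddMonoid.End (Polynomial A) :=
  AddMonoidHom.mulLeft (C a)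

/-- The skew polynomial ring `A[x;θ]`, realized as the subring of additive
endomorphisms of `A[x]` generated by the constants (acting by left multiplication)
and the twisted shift `Tmap θ`.  In this model multiplication is composition, so
`(a·xᵏ)·(b·xʲ) = a θᵏ(b) x^{k+j}`, i.e. `x·a = θ(a)·x`. -/
def SkewPolySubring (A : Type*) [CommRing A] (θ : A →+* A) :
    Subring (AddMonoid.End (Polynomial A)) :=
  Subring.closure ((Set.range (Lmap (A := A))) ∪ {Tmap θ})

/-- The skew polynomial ring `A[x;θ]` as a type. -/
abbrev Skew (A : Type*) [CommRing A] (θ : A →+* A) : Type _ := SkewPolySubring A θ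

/-- The element `x` of `A[x;θ]`. -/
def xSkew (A : Type*) [CommRing A] (θ : A →+* A) : Skew A θ :=
  ⟨Tmap θ, Subring.subset_closure (Set.mem_union_right _ rfl)⟩

/-- The constant `a` as an element of `A[x;θ]`. -/
def cSkew {A : Type*} [CommRing A] (θ : A →+* A) (a : A) : Skew A θ :=
  ⟨Lmap a, Subring.subset_closure (Set.mem_union_left _ ⟨a, rfl⟩)⟩

/-- The skew polynomial `∑ aᵢ xⁱ ∈ A[x;θ]` attached to coefficient data `p = ∑ aᵢ Xⁱ`. -/
def ofPoly {A : Type*} [CommRing A] (θ : A →+* A) (p : Polynomial A) : Skew A θ :=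
  p.sum fun i a => cSkew θ a * xSkew A θ ^ i

/-- The coefficient data of a skew polynomial, recovered by applying the
endomorphism to the polynomial `1`. -/
def toPoly {A : Type*} [CommRing A] {θ : A →+* A} (f : Skew A θ) : Polynomial A :=
  (f : AddMonoid.End (Polynomial A)) 1

/-- `g |ᵣ p` : `g` is a right divisor of `p` in `A[x;θ]`, i.e. `p = u·g`. -/
def RDvd {A : Type*} [CommRing A] {θ : A →+* A} (g p : Skew A θ) : Prop :=
  ∃ u : Skew A θ, p = u * g

/-- The left ideal `⟨x^n - 1⟩` of `A[x;θ]`. -/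
def skewIdeal (A : Type*) [CommRing A] (θ : A →+* A) (n : ℕ) :
    Submodule (Skew A θ) (Skew A θ) :=
  Submodule.span (Skew A θ) {xSkew A θ ^ n - 1}

/-- The quotient left `A[x;θ]`-module `A[x;θ]/⟨x^n-1⟩`. -/
abbrev SkewQuot (A : Type*) [CommRing A] (θ : A →+* A) (n : ℕ) : Type _ :=
  Skew A θ ⧸ skewIdeal A θ n

/-- The polynomial `c₀ + c₁X + ⋯ + c_{n-1}X^{n-1}` attached to a word `c ∈ Aⁿ`. -/
def wordPoly {A : Type*} [CommRing A] {n : ℕ} (c : Fin n → A) : Polynomial A :=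
  ∑ i : Fin n, C (c i) * X ^ (i : ℕ)

/-- Identify the word `c ∈ Aⁿ` with the class of `∑ cᵢ xⁱ` in `A[x;θ]/⟨x^n-1⟩`. -/
def wordToQuot {A : Type*} [CommRing A] (θ : A →+* A) {n : ℕ} (c : Fin n → A) :
    SkewQuot A θ n :=
  Submodule.Quotient.mk (ofPoly θ (wordPoly c))

/-- A linear code of length `n` over `A`: an `A`-submodule of `Aⁿ`, as a set. -/
def IsLinearCode (A : Type*) [CommRing A] {n : ℕ} (C : Set (Fin n → A)) : Prop :=
  0 ∈ C ∧ (∀ u ∈ C, ∀ v ∈ C, u + v ∈ C) ∧ ∀ γ : A, ∀ u ∈ C, γ • u ∈ C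

/-- The `θ`-cyclic shift `(c₀,…,c_{n-1}) ↦ (θ(c_{n-1}),θ(c₀),…,θ(c_{n-2}))`. -/
def skewShift {A : Type*} [CommRing A] (θ : A →+* A) {n : ℕ} [NeZero n]
    (c : Fin n → A) : Fin n → A :=
  fun i => θ (c (i - 1))
/-! ### The module `R_θ` and `Z₂Z₄[ξ]`-codes -/

/-- A `Z₂Z₄[ξ]`-linear code: an `R₄`-submodule of `R₂^r × R₄^s` (as a set). -/
def IsZ2Z4Linear (h : Z4[X]) {r s : ℕ} (C : Set ((Fin r → R2 h) × (Fin s → R4 h))) : Prop :=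
  0 ∈ C ∧ (∀ u ∈ C, ∀ v ∈ C, u + v ∈ C) ∧ ∀ γ : R4 h, ∀ u ∈ C, smulStar h γ u ∈ C

/-- The joint `θ`-cyclic shift on `R₂^r × R₄^s`. -/
def jointShift (h : Z4[X]) (θ2 : R2 h →+* R2 h) (θ4 : R4 h →+* R4 h) {r s : ℕ}
    [NeZero r] [NeZero s] (v : (Fin r → R2 h) × (Fin s → R4 h)) :
    (Fin r → R2 h) × (Fin s → R4 h) :=
  (skewShift θ2 v.1, skewShift θ4 v.2)

/-- The identification of `R₂^r × R₄^s` with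
`R_θ = R₂[x;θ₂]/⟨x^r-1⟩ × R₄[x;θ₄]/⟨x^s-1⟩`. -/
def pairToQuot (h : Z4[X]) (θ2 : R2 h →+* R2 h) (θ4 : R4 h →+* R4 h) {r s : ℕ}
    (v : (Fin r → R2 h) × (Fin s → R4 h)) :
    SkewQuot (R2 h) θ2 r × SkewQuot (R4 h) θ4 s :=
  (wordToQuot θ2 v.1, wordToQuot θ4 v.2)

/-- The coefficientwise mod 2 reduction `R₄[x;θ₄] → R₂[x;θ₂]`, `f ↦ f̄`. -/
def redSkew (h : Z4[X]) (θ2 : R2 h →+* R2 h) {θ4 : R4 h →+* R4 h}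
    (f : Skew (R4 h) θ4) : Skew (R2 h) θ2 :=
  ofPoly θ2 ((toPoly f).map (barR h))

/-- The left action of `R₄[x;θ₄]` on `R_θ`, `f * (g(x), h(x)) = (f̄ g mod (x^r-1), f h mod (x^s-1))`. -/
def smulRtheta (h : Z4[X]) (θ2 : R2 h →+* R2 h) (θ4 : R4 h →+* R4 h) {r s : ℕ}
    (f : Skew (R4 h) θ4)
    (u : SkewQuot (R2 h) θ2 r × SkewQuot (R4 h) θ4 s) :
    SkewQuot (R2 h) θ2 r × SkewQuot (R4 h) θ4 s :=
  (redSkew h θ2 f • u.1, f • u.2)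

/-- `D` is a left `R₄[x;θ₄]`-submodule of `R_θ` (with respect to the action above). -/
def IsLeftSubmodRtheta (h : Z4[X]) (θ2 : R2 h →+* R2 h) (θ4 : R4 h →+* R4 h) {r s : ℕ}
    (D : Set (SkewQuot (R2 h) θ2 r × SkewQuot (R4 h) θ4 s)) : Prop :=
  0 ∈ D ∧ (∀ u ∈ D, ∀ v ∈ D, u + v ∈ D) ∧
    ∀ f : Skew (R4 h) θ4, ∀ u ∈ D, smulRtheta h θ2 θ4 f u ∈ D

/-!
Reduction mod 2 is a surjective ring homomorphism `R₄[x;θ₄] → R₂[x;θ₂]`, by the universal property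
of skew polynomial rings, and the joint shift acts on `R_θ` as multiplication by `x`, so that `C` is
a left `R₄[x;θ₄]`-submodule.

The `g ∈ R₂[x;θ₂]` with `(g, 0) ∈ C` form a left ideal containing `x^r - 1`. As `R₂` is a field,
right division makes this ideal principal, say generated by `f`. Choosing any `(l₁, 2q) ∈ C`, one
has `C = ker Ψ|_C + ⟨(l₁, 2q)⟩ = ⟨(f, 0), (l₁, 2q)⟩`. A lift `H` of `h_q` satisfies
`H q ≡ x^s - 1 (mod 2)`, so `H · 2q = 2 (x^s - 1) = 0` in the quotient; hence `(h_q l₁, 0) ∈ C`,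
that is, `f` right-divides `h_q l₁`.
-/

section SkewRing

variable {A : Type*} [CommRing A] {θ : A →+* A}

/-- The inclusion of the constants `A → A[x;θ]`, as a ring homomorphism. -/
def cSkewHom (θ : A →+* A) : A →+* Skew A θ :=
  ((Module.toAddMonoidEnd A[X] A[X]).comp C).codRestrict _ fun a => (cSkew θ a).2

theorem cSkewHom_apply (a : A) : cSkewHom θ a = cSkew θ a := rfl

theorem coe_cSkew_apply (a : A) (p : A[X]) : (cSkew θ a).1 p = C a * p := rfl

theorem coe_xSkew_apply (p : A[X]) : (xSkew A θ).1 p = p.map θ * X := rfl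

theorem toPoly_cSkew (a : A) : toPoly (cSkew θ a) = C a := mul_one _

theorem toPoly_xSkew : toPoly (xSkew A θ) = X := by
  rw [toPoly, coe_xSkew_apply, Polynomial.map_one, one_mul]

theorem toPoly_add (f g : Skew A θ) : toPoly (f + g) = toPoly f + toPoly g := rfl

theorem toPoly_mul (f g : Skew A θ) : toPoly (f * g) = f.1 (toPoly g) := rfl

theorem xSkew_mul_cSkew (a : A) : xSkew A θ * cSkew θ a = cSkew θ (θ a) * xSkew A θ := by
  refine Subtype.ext <| AddMonoidHom.ext fun p => ?_
  change (C a * p).map θ * X = C (θ a) * (p.map θ * X)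
  rw [Polynomial.map_mul, map_C, mul_assoc]

theorem ofPoly_eq_eval₂ (p : A[X]) : ofPoly θ p = p.eval₂ (cSkewHom θ) (xSkew A θ) := by
  rw [eval₂_eq_sum]
  rfl

@[elab_as_elim]
theorem skew_induction {P : Skew A θ → Prop} (const : ∀ a, P (cSkew θ a)) (x : P (xSkew A θ))
    (add : ∀ f g, P f → P g → P (f + g)) (mul : ∀ f g, P f → P g → P (f * g)) (f : Skew A θ) :
    P f := by
  obtain ⟨f, hf⟩ := f
  induction hf using Subring.closure_induction with
  | mem _ hf =>
    obtain ⟨a, rfl⟩ | rfl := hf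
    exacts [const a, x]
  | zero =>
    convert const 0
    exact (map_zero (cSkewHom θ)).symm
  | one =>
    convert const 1
    exact (map_one (cSkewHom θ)).symm
  | add _ _ _ _ hf hg => exact add _ _ hf hg
  | neg f _ hf =>
    convert mul _ _ (const (-1)) hf
    rw [← cSkewHom_apply, map_neg, map_one, neg_one_mul]
    rfl
  | mul _ _ _ _ hf hg => exact mul _ _ hf hg

section Lift

variable {S : Type*} [Ring S] {σ : A →+* S} {y : S}

theorem eval₂_C_mul_left (σ : A →+* S) (y : S) (a : A) (p : A[X]) :
    (C a * p).eval₂ σ y = σ a * p.eval₂ σ y := by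
  induction p using Polynomial.induction_on' with
  | add p q hp hq => rw [mul_add, eval₂_add, eval₂_add, hp, hq, mul_add]
  | monomial k b => rw [C_mul_monomial, eval₂_monomial, eval₂_monomial, map_mul, mul_assoc]

theorem eval₂_map_mul_X (hy : ∀ a, y * σ a = σ (θ a) * y) (p : A[X]) :
    (p.map θ * X).eval₂ σ y = y * p.eval₂ σ y := by
  induction p using Polynomial.induction_on' with
  | add p q hp hq => rw [Polynomial.map_add, add_mul, eval₂_add, eval₂_add, hp, hq, mul_add]
  | monomial k b =>
    rw [map_monomial, monomial_mul_X, eval₂_monomial, eval₂_monomial, ← mul_assoc, hy, mul_assoc,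
      pow_succ']

theorem eval₂_coe_apply (hy : ∀ a, y * σ a = σ (θ a) * y) (f : Skew A θ) (p : A[X]) :
    (f.1 p).eval₂ σ y = (toPoly f).eval₂ σ y * p.eval₂ σ y := by
  induction f using skew_induction generalizing p with
  | const a => rw [toPoly_cSkew, eval₂_C, coe_cSkew_apply, eval₂_C_mul_left]
  | x => rw [toPoly_xSkew, eval₂_X, coe_xSkew_apply, eval₂_map_mul_X hy]
  | add f g hf hg =>
    have hadd : (f + g).1 p = f.1 p + g.1 p := rfl
    rw [hadd, toPoly_add, eval₂_add, eval₂_add, hf, hg, add_mul]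
  | mul f g hf hg =>
    have hmul : (f * g).1 p = f.1 (g.1 p) := rfl
    rw [hmul, toPoly_mul, hf, hg, hf (toPoly g), mul_assoc]

/-- The universal property of `A[x;θ]`: a ring homomorphism `σ : A → S` extends to `A[x;θ]` by
`x ↦ y` as soon as `y * σ a = σ (θ a) * y` for all `a`. -/
def skewLift (σ : A →+* S) (y : S) (hy : ∀ a, y * σ a = σ (θ a) * y) : Skew A θ →+* S where
  toFun f := (toPoly f).eval₂ σ y
  map_one' := eval₂_one σ y
  map_mul' f g := eval₂_coe_apply hy f (toPoly g)
  map_zero' := eval₂_zero σ y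
  map_add' _ _ := eval₂_add σ y

end Lift

theorem coe_xSkew_pow_apply (k : ℕ) (p : A[X]) :
    (xSkew A θ ^ k).1 p = p.map (θ ^ k) * X ^ k := by
  induction k with
  | zero => simp [RingHom.one_def]
  | succ k ih =>
    calc (xSkew A θ ^ (k + 1)).1 p = (xSkew A θ).1 ((xSkew A θ ^ k).1 p) := by rw [pow_succ']; rfl
      _ = (p.map (θ ^ k) * X ^ k).map θ * X := by rw [ih]; rfl
      _ = p.map (θ ^ (k + 1)) * X ^ (k + 1) := by
        simp [Polynomial.map_map, mul_assoc, pow_succ, pow_succ' θ, RingHom.mul_def]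

theorem coe_ofPoly_monomial_apply (k : ℕ) (a : A) (p : A[X]) :
    (ofPoly θ (monomial k a)).1 p = C a * (p.map (θ ^ k) * X ^ k) := by
  rw [ofPoly_eq_eval₂, eval₂_monomial, ← coe_xSkew_pow_apply]
  rfl

theorem toPoly_ofPoly (p : A[X]) : toPoly (ofPoly θ p) = p := by
  induction p using Polynomial.induction_on' with
  | add p q hp hq =>
    rw [ofPoly_eq_eval₂, eval₂_add, ← ofPoly_eq_eval₂, ← ofPoly_eq_eval₂]
    exact congrArg₂ (· + ·) hp hq
  | monomial k a =>
    rw [toPoly, coe_ofPoly_monomial_apply, Polynomial.map_one, one_mul, C_mul_X_pow_eq_monomial]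

theorem ofPoly_toPoly (f : Skew A θ) : ofPoly θ (toPoly f) = f := by
  rw [ofPoly_eq_eval₂]
  change skewLift (cSkewHom θ) (xSkew A θ) xSkew_mul_cSkew f = f
  induction f using skew_induction with
  | const a => exact (congrArg _ (toPoly_cSkew a)).trans (eval₂_C _ _)
  | x => exact (congrArg _ toPoly_xSkew).trans (eval₂_X _ _)
  | add f g hf hg => rw [map_add, hf, hg]
  | mul f g hf hg => rw [map_mul, hf, hg]

theorem toPoly_eq_zero_iff {f : Skew A θ} : toPoly f = 0 ↔ f = 0 := by
  refine ⟨fun hf => ?_, fun hf => hf ▸ rfl⟩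
  rw [← ofPoly_toPoly f, hf, ofPoly_eq_eval₂, eval₂_zero]

theorem rDvd_iff_mem_span {f g : Skew A θ} : RDvd f g ↔ g ∈ Submodule.span (Skew A θ) {f} := by
  simp only [RDvd, Submodule.mem_span_singleton, smul_eq_mul, eq_comm]

end SkewRing

section Division

variable {A : Type*} [CommRing A] {θ : A →+* A}

theorem exists_degree_toPoly_mul_eq_and_leadingCoeff_eq {f g : Skew A θ}
    (hf : IsUnit (toPoly f).leadingCoeff) (hg : toPoly g ≠ 0)
    (hfg : (toPoly f).degree ≤ (toPoly g).degree) :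
    ∃ u : Skew A θ, (toPoly (u * f)).degree = (toPoly g).degree ∧
      (toPoly (u * f)).leadingCoeff = (toPoly g).leadingCoeff := by
  have : Nontrivial A := Polynomial.nontrivial_iff.mp ⟨_, _, hg⟩
  obtain ⟨k, hk⟩ := Nat.exists_eq_add_of_le (natDegree_le_natDegree hfg)
  obtain ⟨b, hb⟩ := (hf.map (θ ^ k)).exists_left_inv
  set a := (toPoly g).leadingCoeff * b
  set P := (toPoly f).map (θ ^ k) * X ^ k with hP
  have hlead : (θ ^ k) (toPoly f).leadingCoeff ≠ 0 := (hf.map (θ ^ k)).ne_zero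
  have hPcoeff : a * P.leadingCoeff = (toPoly g).leadingCoeff := by
    rw [hP, leadingCoeff_mul_X_pow, leadingCoeff_map_of_leadingCoeff_ne_zero _ hlead, mul_assoc,
      hb, mul_one]
  have hPdeg : P.degree = (toPoly g).degree := by
    have hf0 : toPoly f ≠ 0 := leadingCoeff_ne_zero.mp hf.ne_zero
    rw [hP, degree_mul_X_pow, degree_map_eq_of_leadingCoeff_ne_zero _ hlead,
      degree_eq_natDegree hf0, degree_eq_natDegree hg, hk, Nat.cast_add]
  have hne : a * P.leadingCoeff ≠ 0 := hPcoeff ▸ leadingCoeff_ne_zero.mpr hg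
  refine ⟨ofPoly θ (monomial k a), ?_, ?_⟩ <;>
    rw [toPoly_mul, coe_ofPoly_monomial_apply, ← hP]
  · rw [degree_C_mul_of_mul_ne_zero hne, hPdeg]
  · rw [leadingCoeff_mul' (by rwa [leadingCoeff_C]), leadingCoeff_C, hPcoeff]

theorem exists_degree_toPoly_sub_mul_lt [Nontrivial A] {f : Skew A θ}
    (hf : IsUnit (toPoly f).leadingCoeff) (g : Skew A θ) :
    ∃ u : Skew A θ, (toPoly (g - u * f)).degree < (toPoly f).degree := by
  induction hn : (toPoly g).degree using WellFoundedLT.induction generalizing g with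
  | ind n ih =>
    obtain hlt | hle := lt_or_ge (toPoly g).degree (toPoly f).degree
    · exact ⟨0, by rwa [zero_mul, sub_zero]⟩
    have hg : toPoly g ≠ 0 := by
      rintro hg
      rw [hg, degree_zero, le_bot_iff, degree_eq_bot] at hle
      exact hf.ne_zero (leadingCoeff_eq_zero.mpr hle)
    obtain ⟨v, hdeg, hlead⟩ := exists_degree_toPoly_mul_eq_and_leadingCoeff_eq hf hg hle
    have hlt : (toPoly (g - v * f)).degree < n := hn ▸ degree_sub_lt_left hdeg.symm hg hlead.symm
    obtain ⟨u, hu⟩ := ih _ hlt (g - v * f) rfl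
    exact ⟨v + u, by rwa [add_mul, ← sub_sub]⟩

theorem isPrincipalIdealRing_skew (hA : IsField A) : IsPrincipalIdealRing (Skew A θ) where
  principal J := by
    have : Nontrivial A := hA.nontrivial
    obtain rfl | hJ := eq_or_ne J ⊥
    · exact bot_isPrincipal
    obtain ⟨f, ⟨hfJ, hf⟩, hmin⟩ := exists_minimalFor_of_wellFoundedLT
      (fun f => f ∈ J ∧ f ≠ 0) (fun f => (toPoly f).degree)
      (Submodule.exists_mem_ne_zero_of_ne_bot hJ)
    have hlead : IsUnit (toPoly f).leadingCoeff := by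
      obtain ⟨b, hb⟩ := hA.mul_inv_cancel (leadingCoeff_ne_zero.mpr (toPoly_eq_zero_iff.not.mpr hf))
      exact .of_mul_eq_one b hb
    refine ⟨f, le_antisymm (fun g hg => ?_) ((Submodule.span_singleton_le_iff_mem f J).mpr hfJ)⟩
    obtain ⟨u, hu⟩ := exists_degree_toPoly_sub_mul_lt hlead g
    have hrem : g - u * f ∈ J := J.sub_mem hg (J.smul_mem u hfJ)
    have hzero : g - u * f = 0 := by
      by_contra hne
      exact hu.not_ge (hmin ⟨hrem, hne⟩ hu.le)
    exact Submodule.mem_span_singleton.mpr ⟨u, (sub_eq_zero.mp hzero).symm⟩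

end Division

section CoefficientChange

variable {A B : Type*} [CommRing A] [CommRing B] {θ : A →+* A} {τ : B →+* B}

/-- The ring homomorphism `A[x;θ] → B[x;τ]` induced coefficientwise by a ring homomorphism
`φ : A → B` that intertwines `θ` and `τ`. The copy makes its underlying function unfold to that of
`redSkew`. -/
def mapSkew (φ : A →+* B) (hφ : φ.comp θ = τ.comp φ) : Skew A θ →+* Skew B τ :=
  (skewLift ((cSkewHom τ).comp φ) (xSkew B τ) fun a => by
    have ha : φ (θ a) = τ (φ a) := RingHom.congr_fun hφ a
    rw [RingHom.comp_apply, RingHom.comp_apply, ha]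
    exact xSkew_mul_cSkew (φ a)).copy
  (fun f => ofPoly τ ((toPoly f).map φ)) <| funext fun f => by
    rw [ofPoly_eq_eval₂, eval₂_map]
    rfl

variable {φ : A →+* B} {hφ : φ.comp θ = τ.comp φ}

theorem mapSkew_apply (f : Skew A θ) : mapSkew φ hφ f = ofPoly τ ((toPoly f).map φ) := rfl

theorem mapSkew_ofPoly (p : A[X]) : mapSkew φ hφ (ofPoly θ p) = ofPoly τ (p.map φ) := by
  rw [mapSkew_apply, toPoly_ofPoly]

theorem mapSkew_cSkew (a : A) : mapSkew φ hφ (cSkew θ a) = cSkew τ (φ a) := by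
  rw [mapSkew_apply, toPoly_cSkew, map_C, ofPoly_eq_eval₂, eval₂_C, cSkewHom_apply]

theorem mapSkew_xSkew : mapSkew φ hφ (xSkew A θ) = xSkew B τ := by
  rw [mapSkew_apply, toPoly_xSkew, map_X, ofPoly_eq_eval₂, eval₂_X]

theorem mapSkew_surjective (h : Function.Surjective φ) : Function.Surjective (mapSkew φ hφ) := by
  intro g
  obtain ⟨p, hp⟩ := Polynomial.map_surjective φ h (toPoly g)
  exact ⟨ofPoly θ p, by rw [mapSkew_ofPoly, hp, ofPoly_toPoly]⟩

theorem C_mul_eq_zero_of_map_eq_zero {a : A} (ha : ∀ b, φ b = 0 → a * b = 0) {p : A[X]}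
    (hp : p.map φ = 0) : C a * p = 0 := by
  ext i
  rw [coeff_C_mul, coeff_zero]
  exact ha _ (by rw [← coeff_map, hp, coeff_zero])

theorem cSkew_mul_eq_zero_of_mapSkew_eq_zero {a : A} (ha : ∀ b, φ b = 0 → a * b = 0)
    {f : Skew A θ} (hf : mapSkew φ hφ f = 0) : cSkew θ a * f = 0 := by
  have hmap : (toPoly f).map φ = 0 := by
    rw [← toPoly_ofPoly (θ := τ) ((toPoly f).map φ), ← mapSkew_apply (hφ := hφ), hf]
    rfl
  rw [← toPoly_eq_zero_iff, toPoly_mul, coe_cSkew_apply, C_mul_eq_zero_of_map_eq_zero ha hmap]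

end CoefficientChange

section Words

variable {A : Type*} [CommRing A] {θ : A →+* A} {n : ℕ}

theorem wordPoly_add (c d : Fin n → A) : wordPoly (c + d) = wordPoly c + wordPoly d := by
  simp only [wordPoly, Pi.add_apply, C_add, add_mul, Finset.sum_add_distrib]

theorem wordPoly_smul (a : A) (c : Fin n → A) : wordPoly (a • c) = C a * wordPoly c := by
  simp only [wordPoly, Pi.smul_apply, smul_eq_mul, C_mul, mul_assoc, Finset.mul_sum]

theorem exists_map_wordPoly_mul_X_sub_eq [NeZero n] (c : Fin n → A) :
    ∃ a, (wordPoly c).map θ * X - wordPoly (skewShift θ c) = C a * (X ^ n - 1) := by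
  obtain ⟨n, rfl⟩ := Nat.exists_eq_succ_of_ne_zero (NeZero.ne n)
  refine ⟨θ (c (Fin.last n)), ?_⟩
  have hzero : (0 - 1 : Fin (n + 1)) = Fin.last n := by
    rw [sub_eq_iff_eq_add, Fin.last_add_one]
  have hsucc (i : Fin n) : i.succ - 1 = i.castSucc := by
    rw [sub_eq_iff_eq_add, Fin.coeSucc_eq_succ]
  rw [wordPoly, wordPoly, Fin.sum_univ_castSucc, Fin.sum_univ_succ]
  simp only [skewShift, hzero, hsucc, Polynomial.map_add, Polynomial.map_sum, Polynomial.map_mul,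
    map_C, Polynomial.map_pow, map_X, add_mul, Finset.sum_mul, mul_assoc, ← pow_succ,
    Fin.val_castSucc, Fin.val_last, Fin.val_succ, Fin.val_zero, pow_zero, mul_sub, mul_one]
  abel

theorem wordToQuot_add (c d : Fin n → A) :
    wordToQuot θ (c + d) = wordToQuot θ c + wordToQuot θ d := by
  simp only [wordToQuot, wordPoly_add, ofPoly_eq_eval₂, eval₂_add, Submodule.Quotient.mk_add]

theorem wordToQuot_smul (a : A) (c : Fin n → A) :
    wordToQuot θ (a • c) = cSkew θ a • wordToQuot θ c := by
  rw [wordToQuot, wordPoly_smul, ofPoly_eq_eval₂, eval₂_C_mul_left, ← ofPoly_eq_eval₂]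
  rfl

theorem wordToQuot_zero : wordToQuot θ (0 : Fin n → A) = 0 := by
  simpa using wordToQuot_add (θ := θ) (0 : Fin n → A) 0

theorem wordToQuot_skewShift [NeZero n] (c : Fin n → A) :
    wordToQuot θ (skewShift θ c) = xSkew A θ • wordToQuot θ c := by
  obtain ⟨a, ha⟩ := exists_map_wordPoly_mul_X_sub_eq (θ := θ) c
  have hdiff : xSkew A θ * ofPoly θ (wordPoly c) - ofPoly θ (wordPoly (skewShift θ c))
      = cSkew θ a * (xSkew A θ ^ n - 1) := by
    have hev := congrArg (eval₂ (cSkewHom θ) (xSkew A θ)) ha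
    rw [eval₂_sub, eval₂_map_mul_X xSkew_mul_cSkew, eval₂_C_mul_left, eval₂_sub, eval₂_X_pow,
      eval₂_one] at hev
    rwa [ofPoly_eq_eval₂, ofPoly_eq_eval₂]
  refine ((Submodule.Quotient.eq _).mpr ?_).symm
  exact Submodule.mem_span_singleton.mpr ⟨cSkew θ a, hdiff.symm⟩

end Words

section TwoGenerators

variable {R S M N : Type*} [Ring R] [Ring S] [AddCommGroup M] [AddCommGroup N]

theorem eq_ker_inf_sup_span_singleton_of_map_eq [Module S M] [Module S N] {f : M →ₗ[S] N}
    {D : Submodule S M} {x : M} (hx : x ∈ D) (hD : D.map f = Submodule.span S {f x}) :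
    D = LinearMap.ker f ⊓ D ⊔ Submodule.span S {x} := by
  have hxD : Submodule.span S {x} ≤ D := (Submodule.span_singleton_le_iff_mem x D).mpr hx
  rw [sup_comm, ← sup_inf_assoc_of_le _ hxD, right_eq_inf, ← Submodule.comap_map_eq,
    Submodule.map_span, Set.image_singleton, ← hD]
  exact Submodule.le_comap_map f D

/-- A submodule over `S` viewed as a submodule over `R`, when `S` acts through a surjection
`φ : S → R`; it turns a left `R₄[x;θ₄]`-submodule into one over `R₂[x;θ₂]`. -/
def submoduleOfSurjective [Module R M] [Module S M] {φ : S →+* R} (hφ : Function.Surjective φ)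
    (hsmul : ∀ (c : S) (m : M), c • m = φ c • m) (P : Submodule S M) : Submodule R M :=
  { P with
    smul_mem' := fun c m hm => by
      obtain ⟨c, rfl⟩ := hφ c
      exact hsmul c m ▸ P.smul_mem c hm }

theorem exists_eq_span_pair_of_map_snd_eq_span_singleton [IsPrincipalIdealRing R]
    {I : Submodule R R} [Module S (R ⧸ I)] [Module S N] {φ : S →+* R}
    (hφ : Function.Surjective φ) (hsmul : ∀ (c : S) (m : R ⧸ I), c • m = φ c • m)
    {D : Submodule S ((R ⧸ I) × N)} {n : N}
    (hD : D.map (LinearMap.snd S (R ⧸ I) N) = Submodule.span S {n}) :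
    ∃ f l : R, I ≤ Submodule.span R {f} ∧
      (∀ c : S, c • n = 0 → φ c * l ∈ Submodule.span R {f}) ∧
      D = Submodule.span S {(Submodule.Quotient.mk f, 0), (Submodule.Quotient.mk l, n)} := by
  obtain ⟨⟨w, n'⟩, hlD, hn⟩ : n ∈ D.map (LinearMap.snd S (R ⧸ I) N) :=
    hD ▸ Submodule.mem_span_singleton_self n
  obtain rfl : n' = n := hn
  obtain ⟨l, rfl⟩ := Submodule.Quotient.mk_surjective I w
  obtain ⟨f, hf⟩ := IsPrincipalIdealRing.principal
    ((submoduleOfSurjective hφ hsmul (D.comap (LinearMap.inl S (R ⧸ I) N))).comap I.mkQ)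
  have hmem (g : R) : g ∈ Submodule.span R {f} ↔ (Submodule.Quotient.mk g, 0) ∈ D := by
    rw [← hf]
    rfl
  refine ⟨f, l, fun g hg => ?_, fun c hc => ?_, ?_⟩
  · rw [hmem, (Submodule.Quotient.mk_eq_zero I).mpr hg]
    exact D.zero_mem
  · have hcl := D.smul_mem c hlD
    rwa [Prod.smul_mk, hc, hsmul, ← Submodule.Quotient.mk_smul, smul_eq_mul, ← hmem] at hcl
  · have hker : LinearMap.ker (LinearMap.snd S (R ⧸ I) N) ⊓ D
        = Submodule.span S {(Submodule.Quotient.mk f, 0)} := by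
      refine le_antisymm ?_ ?_
      · rintro ⟨w, _⟩ ⟨rfl, hgD⟩
        obtain ⟨g, rfl⟩ := Submodule.Quotient.mk_surjective I w
        obtain ⟨u, rfl⟩ := Submodule.mem_span_singleton.mp ((hmem g).mpr hgD)
        obtain ⟨c, rfl⟩ := hφ u
        refine Submodule.mem_span_singleton.mpr ⟨c, ?_⟩
        rw [Prod.smul_mk, smul_zero, hsmul, Submodule.Quotient.mk_smul]
      · refine (Submodule.span_singleton_le_iff_mem _ _).mpr ⟨rfl, ?_⟩
        exact (hmem f).mp (Submodule.mem_span_singleton_self f)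
    rw [Submodule.span_insert, ← hker]
    exact eq_ker_inf_sup_span_singleton_of_map_eq hlD hD

end TwoGenerators

section Reduction

variable {h : Z4[X]}

theorem out_mk_modByMonic {A : Type*} [CommRing A] {g : A[X]} (hg : g.Monic) (p : A[X]) :
    Quotient.out (Ideal.Quotient.mk (Ideal.span {g}) p) %ₘ g = p %ₘ g := by
  have hout := Ideal.Quotient.mk_out (Ideal.Quotient.mk (Ideal.span {g}) p)
  rw [Ideal.Quotient.eq, Ideal.mem_span_singleton] at hout
  rwa [← sub_eq_zero, ← sub_modByMonic, modByMonic_eq_zero_iff_dvd hg]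

theorem barR_mk (p : Z4[X]) :
    barR h (Ideal.Quotient.mk _ p) = Ideal.Quotient.mk _ (p.map bar) := rfl

theorem rep2_barR (hmon : h.Monic) (a : R4 h) : rep2 h (barR h a) = (rep4 h a).map bar := by
  obtain ⟨p, rfl⟩ := Ideal.Quotient.mk_surjective a
  rw [barR_mk, rep2, rep4, out_mk_modByMonic hmon, out_mk_modByMonic (hmon.map bar),
    map_modByMonic _ hmon]

theorem barR_thetaFun4 (hmon : h.Monic) (a : R4 h) :
    barR h (thetaFun4 h a) = thetaFun2 h (barR h a) := by
  have hxi : barR h (xi h ^ 2) = xibar h ^ 2 := by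
    rw [map_pow, xi, barR_mk, map_X, xibar]
  rw [thetaFun4, thetaFun2, rep2_barR hmon, aeval_def, aeval_def, hom_eval₂, eval₂_map, hxi]
  congr 1
  exact RingHom.ext_zmod _ _

theorem bar_surjective : Function.Surjective bar := ZMod.castHom_surjective _

theorem barR_surjective : Function.Surjective (barR h) :=
  Ideal.quotientMap_surjective (Polynomial.map_surjective bar bar_surjective)

theorem exists_map_bar_eq_zero_of_barR_eq_zero {a : R4 h} (ha : barR h a = 0) :
    ∃ p : Z4[X], p.map bar = 0 ∧ Ideal.Quotient.mk _ p = a := by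
  obtain ⟨p, rfl⟩ := Ideal.Quotient.mk_surjective a
  rw [barR_mk, Ideal.Quotient.eq_zero_iff_mem, Ideal.mem_span_singleton] at ha
  obtain ⟨v, hv⟩ := ha
  obtain ⟨u, rfl⟩ := Polynomial.map_surjective bar bar_surjective v
  refine ⟨p - h * u, by rw [Polynomial.map_sub, Polynomial.map_mul, hv, sub_self], ?_⟩
  rw [Ideal.Quotient.eq, sub_sub_cancel_left, neg_mem_iff]
  exact Ideal.mem_span_singleton.mpr (dvd_mul_right h u)

theorem two_mul_eq_zero_of_barR_eq_zero {a : R4 h} (ha : barR h a = 0) : 2 * a = 0 := by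
  obtain ⟨p, hp, rfl⟩ := exists_map_bar_eq_zero_of_barR_eq_zero ha
  have hker : ∀ z : Z4, bar z = 0 → 2 * z = 0 := by
    unfold bar
    decide
  have hp2 : C 2 * p = 0 := C_mul_eq_zero_of_map_eq_zero hker hp
  rw [← map_ofNat (Ideal.Quotient.mk (Ideal.span {h})) 2, ← map_mul, ← map_ofNat C 2, hp2, map_zero]

theorem isField_R2 (hirr : Irreducible (h.map bar)) : IsField (R2 h) :=
  (Ideal.Quotient.maximal_ideal_iff_isField_quotient _).mp
    (PrincipalIdealRing.isMaximal_of_irreducible hirr)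

end Reduction

section Codes

variable {h : Z4[X]} {θ4 : R4 h →+* R4 h} {θ2 : R2 h →+* R2 h} {r s : ℕ}

theorem pairToQuot_zero :
    pairToQuot h θ2 θ4 (0 : (Fin r → R2 h) × (Fin s → R4 h)) = 0 :=
  Prod.ext wordToQuot_zero wordToQuot_zero

theorem pairToQuot_add (u v : (Fin r → R2 h) × (Fin s → R4 h)) :
    pairToQuot h θ2 θ4 (u + v) = pairToQuot h θ2 θ4 u + pairToQuot h θ2 θ4 v :=
  Prod.ext (wordToQuot_add _ _) (wordToQuot_add _ _)

theorem pairToQuot_smulStar (hc : (barR h).comp θ4 = θ2.comp (barR h)) (a : R4 h)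
    (v : (Fin r → R2 h) × (Fin s → R4 h)) :
    pairToQuot h θ2 θ4 (smulStar h a v)
      = smulRtheta h θ2 θ4 (cSkew θ4 a) (pairToQuot h θ2 θ4 v) := by
  refine Prod.ext ((wordToQuot_smul (barR h a) v.1).trans ?_) (wordToQuot_smul a v.2)
  rw [← mapSkew_cSkew (hφ := hc)]
  rfl

theorem pairToQuot_jointShift [NeZero r] [NeZero s] (hc : (barR h).comp θ4 = θ2.comp (barR h))
    (v : (Fin r → R2 h) × (Fin s → R4 h)) :
    pairToQuot h θ2 θ4 (jointShift h θ2 θ4 v)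
      = smulRtheta h θ2 θ4 (xSkew (R4 h) θ4) (pairToQuot h θ2 θ4 v) := by
  refine Prod.ext ((wordToQuot_skewShift v.1).trans ?_) (wordToQuot_skewShift v.2)
  rw [← mapSkew_xSkew (hφ := hc)]
  rfl

theorem isLeftSubmodRtheta_image_pairToQuot [NeZero r] [NeZero s]
    (hc : (barR h).comp θ4 = θ2.comp (barR h))
    {K : Set ((Fin r → R2 h) × (Fin s → R4 h))} (hlin : IsZ2Z4Linear h K)
    (hcyc : ∀ v ∈ K, jointShift h θ2 θ4 v ∈ K) :
    IsLeftSubmodRtheta h θ2 θ4 (pairToQuot h θ2 θ4 '' K) := by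
  obtain ⟨hzero, hadd, hsmul⟩ := hlin
  have hadd' : ∀ u ∈ pairToQuot h θ2 θ4 '' K, ∀ v ∈ pairToQuot h θ2 θ4 '' K,
      u + v ∈ pairToQuot h θ2 θ4 '' K := by
    rintro _ ⟨u, hu, rfl⟩ _ ⟨v, hv, rfl⟩
    exact ⟨u + v, hadd u hu v hv, pairToQuot_add u v⟩
  refine ⟨⟨0, hzero, pairToQuot_zero⟩, hadd', fun f => ?_⟩
  induction f using skew_induction with
  | const a =>
    rintro _ ⟨v, hv, rfl⟩
    exact ⟨_, hsmul a v hv, pairToQuot_smulStar hc a v⟩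
  | x =>
    rintro _ ⟨v, hv, rfl⟩
    exact ⟨_, hcyc v hv, pairToQuot_jointShift hc v⟩
  | add f g hf hg =>
    intro u hu
    have hfg : smulRtheta h θ2 θ4 (f + g) u
        = smulRtheta h θ2 θ4 f u + smulRtheta h θ2 θ4 g u := by
      refine Prod.ext ?_ (add_smul f g u.2)
      exact (congrArg (· • u.1) (map_add (mapSkew _ hc) f g)).trans (add_smul _ _ u.1)
    exact hfg ▸ hadd' _ (hf u hu) _ (hg u hu)
  | mul f g hf hg =>
    intro u hu
    have hfg : smulRtheta h θ2 θ4 (f * g) u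
        = smulRtheta h θ2 θ4 f (smulRtheta h θ2 θ4 g u) := by
      refine Prod.ext ?_ (mul_smul f g u.2)
      exact (congrArg (· • u.1) (map_mul (mapSkew _ hc) f g)).trans (mul_smul _ _ u.1)
    exact hfg ▸ hf _ (hg u hu)

theorem smul_mk_two_mul_eq_zero (hc : (barR h).comp θ4 = θ2.comp (barR h)) {q : (R4 h)[X]}
    {H : Skew (R4 h) θ4}
    (hH : xSkew (R2 h) θ2 ^ s - 1 = mapSkew (barR h) hc H * ofPoly θ2 (q.map (barR h))) :
    H • (Submodule.Quotient.mk (ofPoly θ4 (2 * q)) : SkewQuot (R4 h) θ4 s) = 0 := by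
  have htwo : cSkew θ4 2 = 2 := map_ofNat (cSkewHom θ4) 2
  have hred : mapSkew (barR h) hc (H * ofPoly θ4 q - (xSkew (R4 h) θ4 ^ s - 1)) = 0 := by
    rw [map_sub, map_mul, mapSkew_ofPoly, ← hH, map_sub, map_pow, mapSkew_xSkew, map_one, sub_self]
  have hlift : 2 * (H * ofPoly θ4 q) = 2 * (xSkew (R4 h) θ4 ^ s - 1) := by
    rw [← sub_eq_zero, ← mul_sub, ← htwo]
    exact cSkew_mul_eq_zero_of_mapSkew_eq_zero (fun _ => two_mul_eq_zero_of_barR_eq_zero) hred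
  have hofPoly : ofPoly θ4 (2 * q) = 2 * ofPoly θ4 q := by
    simp only [two_mul, ofPoly_eq_eval₂, eval₂_add]
  rw [← Submodule.Quotient.mk_smul, smul_eq_mul, hofPoly, ← (Commute.ofNat_left 2 H).left_comm,
    hlift, Submodule.Quotient.mk_eq_zero]
  exact Submodule.smul_mem _ 2 (Submodule.mem_span_singleton_self _)

end Codes

theorem z2z4_skew_cyclic_generators_case_i_general
    {h : Z4[X]} (hirr : Irreducible (h.map bar)) {θ4 : R4 h →+* R4 h} {θ2 : R2 h →+* R2 h}
    (hc : (barR h).comp θ4 = θ2.comp (barR h)) {r s : ℕ} [NeZero r] [NeZero s]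
    {K : Set ((Fin r → R2 h) × (Fin s → R4 h))} (hlin : IsZ2Z4Linear h K)
    (hcyc : ∀ v ∈ K, jointShift h θ2 θ4 v ∈ K) {q : (R4 h)[X]} {hq : (R2 h)[X]}
    (hhq : xSkew (R2 h) θ2 ^ s - 1 = ofPoly θ2 hq * ofPoly θ2 (q.map (barR h)))
    (hPsi : Prod.snd '' (pairToQuot h θ2 θ4 '' K) =
      ↑(Submodule.span (Skew (R4 h) θ4)
        {(Submodule.Quotient.mk (p := skewIdeal (R4 h) θ4 s) (ofPoly θ4 (2 * q)))})) :
    ∃ f l1 : (R2 h)[X],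
      RDvd (ofPoly θ2 f) (xSkew (R2 h) θ2 ^ r - 1) ∧
      RDvd (ofPoly θ2 f) (ofPoly θ2 hq * ofPoly θ2 l1) ∧
      pairToQuot h θ2 θ4 '' K =
        {u | ∃ c1 c2 : Skew (R4 h) θ4,
          u = smulRtheta h θ2 θ4 c1 (Submodule.Quotient.mk (ofPoly θ2 f), 0)
            + smulRtheta h θ2 θ4 c2 (Submodule.Quotient.mk (ofPoly θ2 l1),
                Submodule.Quotient.mk (ofPoly θ4 (2 * q)))} := by
  have : IsPrincipalIdealRing (Skew (R2 h) θ2) := isPrincipalIdealRing_skew (isField_R2 hirr)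
  have hsurj : Function.Surjective (mapSkew (barR h) hc) := mapSkew_surjective barR_surjective
  let _ : Module (Skew (R4 h) θ4) (SkewQuot (R2 h) θ2 r) := .compHom _ (mapSkew (barR h) hc)
  obtain ⟨hzero, hadd, hsmul⟩ := isLeftSubmodRtheta_image_pairToQuot hc hlin hcyc
  let D : Submodule (Skew (R4 h) θ4) (SkewQuot (R2 h) θ2 r × SkewQuot (R4 h) θ4 s) :=
    { carrier := pairToQuot h θ2 θ4 '' K
      add_mem' := fun hu hv => hadd _ hu _ hv
      zero_mem' := hzero
      smul_mem' := hsmul }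
  obtain ⟨f, l, hf, hl, hD⟩ := exists_eq_span_pair_of_map_snd_eq_span_singleton hsurj
    (fun _ _ => rfl) (D := D) (SetLike.coe_injective hPsi)
  refine ⟨toPoly f, toPoly l, ?_, ?_, ?_⟩ <;> simp only [ofPoly_toPoly]
  · exact rDvd_iff_mem_span.mpr (hf (Submodule.mem_span_singleton_self _))
  · obtain ⟨H, hH⟩ := hsurj (ofPoly θ2 hq)
    rw [rDvd_iff_mem_span, ← hH]
    exact hl H (smul_mk_two_mul_eq_zero hc (hH ▸ hhq))
  · ext u
    change u ∈ D ↔ _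
    rw [hD, Submodule.mem_span_pair]
    simp only [eq_comm]
    rfl

/-- If `Ψ(C) = ⟨2q(x)⟩` with `q̄ |ᵣ x^s−1` in `R₂[x,θ₂]`, then
`C = ⟨(f(x),0), (l₁(x),2q(x))⟩` with `f |ᵣ x^r−1` in `R₂[x,θ₂]` and
`f |ᵣ h_q l₁ (mod 2)`, where `x^s−1 = h_q(x)q(x) (mod 2)`. -/
theorem z2z4_skew_cyclic_generators_case_i
    (m : ℕ) (hm : 1 ≤ m) (h : Z4[X]) (hbp : BasicPrimitive h m)
    (θ4 : R4 h →+* R4 h) (hθ4 : ⇑θ4 = thetaFun4 h)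
    (θ2 : R2 h →+* R2 h) (hθ2 : ⇑θ2 = thetaFun2 h)
    (r s : ℕ) [NeZero r] [NeZero s]
    (C : Set ((Fin r → R2 h) × (Fin s → R4 h))) (hlin : IsZ2Z4Linear h C)
    (hcyc : ∀ v ∈ C, jointShift h θ2 θ4 v ∈ C)
    (q : Polynomial (R4 h)) (hq : Polynomial (R2 h))
    (hqdvd : RDvd (ofPoly θ2 (q.map (barR h))) (xSkew (R2 h) θ2 ^ s - 1))
    (hhq : xSkew (R2 h) θ2 ^ s - 1 = ofPoly θ2 hq * ofPoly θ2 (q.map (barR h)))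
    (hPsi : Prod.snd '' (pairToQuot h θ2 θ4 '' C) =
      ↑(Submodule.span (Skew (R4 h) θ4) {(Submodule.Quotient.mk (p := skewIdeal (R4 h) θ4 s) (ofPoly θ4 (2 * q)))})) :
    ∃ f l1 : Polynomial (R2 h),
      RDvd (ofPoly θ2 f) (xSkew (R2 h) θ2 ^ r - 1) ∧
      RDvd (ofPoly θ2 f) (ofPoly θ2 hq * ofPoly θ2 l1) ∧
      pairToQuot h θ2 θ4 '' C =
        {u | ∃ c1 c2 : Skew (R4 h) θ4,
          u = smulRtheta h θ2 θ4 c1 ((Submodule.Quotient.mk (p := skewIdeal (R2 h) θ2 r) (ofPoly θ2 f)), 0)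
            + smulRtheta h θ2 θ4 c2 ((Submodule.Quotient.mk (p := skewIdeal (R2 h) θ2 r) (ofPoly θ2 l1)), (Submodule.Quotient.mk (p := skewIdeal (R4 h) θ4 s) (ofPoly θ4 (2 * q))))} := by
  have hc : (barR h).comp θ4 = θ2.comp (barR h) := RingHom.ext fun a => by
    rw [RingHom.comp_apply, RingHom.comp_apply, hθ4, hθ2, barR_thetaFun4 hbp.1]
  exact z2z4_skew_cyclic_generators_case_i_general hbp.2.2.1 hc hlin hcyc hhq hPsi
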